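/- arXiv:quant-ph/0608022 — 11 statements merged into one kernel-verified Lean document; each statement's English description precedes it below -/
import Mathlib

section
/- Let a, c, t be positive real numbers. Then the maximum of a·t₁ − a·c·t₁²/(c·t₁ + t₃) over all t₁, t₃ ≥ 0 with t₁ + t₃ = t equals a·t/(√c + 1)², and this maximum is attained at t₁ = t/(√c + 1), t₃ = √c·t/(√c + 1). -/
/-- For positive reals `a`, `c`, `t`, the maximum of
`a·t₁ − a·c·t₁²/(c·t₁ + t₃)` over `t₁, t₃ ≥ 0` with `t₁ + t₃ = t` equals
`a·t/(√c + 1)²`, attained at `t₁ = t/(√c + 1)`, `t₃ = √c·t/(√c + 1)`. -/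
theorem stmt0 (a c t : ℝ) (ha : 0 < a) (hc : 0 < c) (ht : 0 < t) :
    IsGreatest {y : ℝ | ∃ t₁ t₃ : ℝ, 0 ≤ t₁ ∧ 0 ≤ t₃ ∧ t₁ + t₃ = t ∧
        y = a * t₁ - a * c * t₁ ^ 2 / (c * t₁ + t₃)}
      (a * t / (Real.sqrt c + 1) ^ 2) ∧
    a * (t / (Real.sqrt c + 1)) -
        a * c * (t / (Real.sqrt c + 1)) ^ 2 /
          (c * (t / (Real.sqrt c + 1)) + Real.sqrt c * t / (Real.sqrt c + 1)) =
      a * t / (Real.sqrt c + 1) ^ 2 := by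
  obtain ⟨s, hs, rfl⟩ : ∃ s : ℝ, 0 < s ∧ c = s ^ 2 :=
    ⟨Real.sqrt c, Real.sqrt_pos.2 hc, (Real.sq_sqrt hc.le).symm⟩
  rw [Real.sqrt_sq hs.le]
  have hs1 : s + 1 ≠ 0 := by positivity
  have key : a * (t / (s + 1)) - a * s ^ 2 * (t / (s + 1)) ^ 2 /
      (s ^ 2 * (t / (s + 1)) + s * t / (s + 1)) = a * t / (s + 1) ^ 2 := by
    have hd : s ^ 2 * (t / (s + 1)) + s * t / (s + 1) = s * t := by
      field_simp
    rw [hd]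
    field_simp
    ring
  refine ⟨⟨⟨t / (s + 1), s * t / (s + 1), by positivity, by positivity, ?_, key.symm⟩, ?_⟩, key⟩
  · field_simp
    ring
  · rintro y ⟨x, z, hx, hz, hxz, rfl⟩
    have hd : 0 < s ^ 2 * x + z := by
      rcases hx.eq_or_lt with h | h
      · subst h
        have : 0 < z := by linarith
        positivity
      · positivity
    have e : a * x - a * s ^ 2 * x ^ 2 / (s ^ 2 * x + z) = a * (x * z) / (s ^ 2 * x + z) := by
      rw [eq_div_iff hd.ne', sub_mul, div_mul_cancel₀ _ hd.ne']
      ring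
    rw [e, div_le_div_iff₀ hd (by positivity), ← hxz]
    nlinarith [mul_nonneg ha.le (sq_nonneg (s * x - z))]
end

section
/- Let a, b, c, d, t be positive real numbers. Then the maximum of a·t₁ + b·t₂ − (√(a·c)·t₁ − √(b·d)·t₂)²/(c·t₁ + d·t₂) over all t₁, t₂ ≥ 0 with t₁ + t₂ = t equals t·(√(a·d) + √(b·c))²/(√c + √d)², and this maximum is attained at t₁ = t·√d/(√c + √d), t₂ = t·√c/(√c + √d). -/
/-- For positive reals `a, b, c, d, t`, the maximum of
`a·t₁ + b·t₂ − (√(a·c)·t₁ − √(b·d)·t₂)²/(c·t₁ + d·t₂)` over `t₁, t₂ ≥ 0` with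
`t₁ + t₂ = t` equals `t·(√(a·d) + √(b·c))²/(√c + √d)²`, attained at
`t₁ = t·√d/(√c + √d)`, `t₂ = t·√c/(√c + √d)`. -/
theorem stmt1 (a b c d t : ℝ) (ha : 0 < a) (hb : 0 < b) (hc : 0 < c)
    (hd : 0 < d) (ht : 0 < t) :
    IsGreatest {y : ℝ | ∃ t₁ t₂ : ℝ, 0 ≤ t₁ ∧ 0 ≤ t₂ ∧ t₁ + t₂ = t ∧
        y = a * t₁ + b * t₂ -
          (Real.sqrt (a * c) * t₁ - Real.sqrt (b * d) * t₂) ^ 2 / (c * t₁ + d * t₂)}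
      (t * (Real.sqrt (a * d) + Real.sqrt (b * c)) ^ 2 /
        (Real.sqrt c + Real.sqrt d) ^ 2) ∧
    a * (t * Real.sqrt d / (Real.sqrt c + Real.sqrt d)) +
        b * (t * Real.sqrt c / (Real.sqrt c + Real.sqrt d)) -
        (Real.sqrt (a * c) * (t * Real.sqrt d / (Real.sqrt c + Real.sqrt d)) -
            Real.sqrt (b * d) * (t * Real.sqrt c / (Real.sqrt c + Real.sqrt d))) ^ 2 /
          (c * (t * Real.sqrt d / (Real.sqrt c + Real.sqrt d)) +
            d * (t * Real.sqrt c / (Real.sqrt c + Real.sqrt d))) =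
      t * (Real.sqrt (a * d) + Real.sqrt (b * c)) ^ 2 /
        (Real.sqrt c + Real.sqrt d) ^ 2 := by
  obtain ⟨p, hp, rfl⟩ : ∃ p : ℝ, 0 < p ∧ a = p ^ 2 :=
    ⟨Real.sqrt a, Real.sqrt_pos.2 ha, (Real.sq_sqrt ha.le).symm⟩
  obtain ⟨q, hq, rfl⟩ : ∃ p : ℝ, 0 < p ∧ b = p ^ 2 :=
    ⟨Real.sqrt b, Real.sqrt_pos.2 hb, (Real.sq_sqrt hb.le).symm⟩
  obtain ⟨r, hr, rfl⟩ : ∃ p : ℝ, 0 < p ∧ c = p ^ 2 :=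
    ⟨Real.sqrt c, Real.sqrt_pos.2 hc, (Real.sq_sqrt hc.le).symm⟩
  obtain ⟨s, hs, rfl⟩ : ∃ p : ℝ, 0 < p ∧ d = p ^ 2 :=
    ⟨Real.sqrt d, Real.sqrt_pos.2 hd, (Real.sq_sqrt hd.le).symm⟩
  have key : ∀ x y : ℝ, 0 < r ^ 2 * x + s ^ 2 * y →
      p ^ 2 * x + q ^ 2 * y - (p * r * x - q * s * y) ^ 2 / (r ^ 2 * x + s ^ 2 * y)
        = (x + y) * (p * s + q * r) ^ 2 / (r + s) ^ 2
          - (p * s + q * r) ^ 2 * (r * x - s * y) ^ 2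
            / ((r + s) ^ 2 * (r ^ 2 * x + s ^ 2 * y)) := by
    intro x y h
    have h1 : r ^ 2 * x + s ^ 2 * y ≠ 0 := h.ne'
    have h2 : r + s ≠ 0 := by positivity
    generalize hD : r ^ 2 * x + s ^ 2 * y = D at h1
    field_simp
    rw [← hD]
    ring
  simp only [← mul_pow, Real.sqrt_sq hr.le, Real.sqrt_sq hs.le,
    Real.sqrt_sq (mul_pos hp hr).le, Real.sqrt_sq (mul_pos hq hs).le,
    Real.sqrt_sq (mul_pos hp hs).le, Real.sqrt_sq (mul_pos hq hr).le]
  have h2 : r + s ≠ 0 := by positivity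
  have hval : p ^ 2 * (t * s / (r + s)) + q ^ 2 * (t * r / (r + s)) -
      (p * r * (t * s / (r + s)) - q * s * (t * r / (r + s))) ^ 2 /
        (r ^ 2 * (t * s / (r + s)) + s ^ 2 * (t * r / (r + s))) =
      t * (p * s + q * r) ^ 2 / (r + s) ^ 2 := by
    rw [key _ _ (by positivity)]
    have e1 : t * s / (r + s) + t * r / (r + s) = t := by
      field_simp
      ring
    have e2 : r * (t * s / (r + s)) - s * (t * r / (r + s)) = 0 := by ring
    rw [e1, e2]
    simp
  refine ⟨⟨⟨t * s / (r + s), t * r / (r + s), by positivity, by positivity, ?_, hval.symm⟩, ?_⟩,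
    hval⟩
  · field_simp
    ring
  · rintro _ ⟨x, y, hx, hy, hxy, rfl⟩
    have hpos : 0 < r ^ 2 * x + s ^ 2 * y := by
      rcases hx.eq_or_lt with h | h
      · have : 0 < y := by linarith
        positivity
      · positivity
    rw [key x y hpos, hxy]
    have : 0 ≤ (p * s + q * r) ^ 2 * (r * x - s * y) ^ 2
            / ((r + s) ^ 2 * (r ^ 2 * x + s ^ 2 * y)) := by positivity
    linarith
end

section
/- Let a, b, c, d, t be positive real numbers, and define g(t₁, t₂, t₃) = a·t₁ + b·t₂ − (√(a·c)·t₁ − √(b·d)·t₂)²/(c·t₁ + d·t₂ + t₃) for t₁, t₂, t₃ ≥ 0 with t₁ + t₂ + t₃ = t (the denominator is strictly positive on this simplex). Then the supremum of g over the simplex {(t₁,t₂,t₃) : t₁,t₂,t₃ ≥ 0, t₁+t₂+t₃ = t} equals the maximum of the following three edge suprema: sup of g(t₁, 0, t₃) over t₁ + t₃ = t, sup of g(0, t₂, t₃) over t₂ + t₃ = t, and sup of g(t₁, t₂, 0) over t₁ + t₂ = t. -/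
/-- The function `g(t₁, t₂, t₃) = a·t₁ + b·t₂ − (√(a·c)·t₁ − √(b·d)·t₂)²/(c·t₁ + d·t₂ + t₃)`. -/
noncomputable def gFun (a b c d t₁ t₂ t₃ : ℝ) : ℝ :=
  a * t₁ + b * t₂ -
    (Real.sqrt (a * c) * t₁ - Real.sqrt (b * d) * t₂) ^ 2 / (c * t₁ + d * t₂ + t₃)

/-- Moving from a point of the simplex along a direction until the boundary is hit. -/
lemma exit_simplex (p v : Fin 3 → ℝ) (hp : ∀ i, 0 ≤ p i) (hv : ∃ i, v i < 0) :
    ∃ s : ℝ, 0 ≤ s ∧ (∀ i, 0 ≤ p i + s * v i) ∧ ∃ i, p i + s * v i = 0 := by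
  classical
  obtain ⟨j, hj⟩ := hv
  obtain ⟨i, hi, hmin⟩ := Finset.exists_min_image (Finset.univ.filter fun i => v i < 0)
    (fun i => p i / (- v i)) ⟨j, by simpa using hj⟩
  have hi' : v i < 0 := by simpa using hi
  have hs : 0 ≤ p i / (- v i) := div_nonneg (hp i) (by linarith)
  refine ⟨p i / (- v i), hs, ?_, i, ?_⟩
  · intro k
    by_cases hk : v k < 0
    · have h := hmin k (by simpa using hk)
      have h2 := (le_div_iff₀ (by linarith : 0 < - v k)).1 h
      linarith
    · have := mul_nonneg hs (not_lt.1 hk)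
      have := hp k
      linarith
  · have : v i ≠ 0 := hi'.ne
    field_simp
    ring

lemma den_pos {c d t x y z : ℝ} (hc : 0 < c) (hd : 0 < d) (ht : 0 < t)
    (hx : 0 ≤ x) (hy : 0 ≤ y) (hz : 0 ≤ z) (h : x + y + z = t) :
    0 < c * x + d * y + z := by
  rcases hx.lt_or_eq with h1 | h1
  · positivity
  rcases hy.lt_or_eq with h2 | h2
  · positivity
  subst h1
  subst h2
  linarith

/-- Every point of the simplex is dominated by a boundary point. -/
lemma dominated (a b c d t : ℝ) (ha : 0 < a) (hc : 0 < c)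
    (hd : 0 < d) (ht : 0 < t) (x y z : ℝ) (hx : 0 ≤ x) (hy : 0 ≤ y) (hz : 0 ≤ z)
    (h : x + y + z = t) :
    ∃ x' y' z' : ℝ, 0 ≤ x' ∧ 0 ≤ y' ∧ 0 ≤ z' ∧ x' + y' + z' = t ∧
      (x' = 0 ∨ y' = 0 ∨ z' = 0) ∧ gFun a b c d x y z ≤ gFun a b c d x' y' z' := by
  have hα : 0 < Real.sqrt (a * c) := Real.sqrt_pos.2 (mul_pos ha hc)
  unfold gFun
  generalize Real.sqrt (a * c) = α at *
  generalize Real.sqrt (b * d) = β at *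
  have hD := den_pos hc hd ht hx hy hz h
  obtain ⟨k, hk⟩ : ∃ k, α * x - β * y = k * (c * x + d * y + z) :=
    ⟨(α * x - β * y) / (c * x + d * y + z), (div_mul_cancel₀ _ hD.ne').symm⟩
  obtain ⟨v, hneg, hsum, hlin, hgain⟩ : ∃ v : Fin 3 → ℝ, (∃ i, v i < 0) ∧
      v 0 + v 1 + v 2 = 0 ∧ α * v 0 - β * v 1 = k * (c * v 0 + d * v 1 + v 2) ∧
      0 ≤ a * v 0 + b * v 1 - k ^ 2 * (c * v 0 + d * v 1 + v 2) := by
    obtain ⟨v, hne, hsum, hlin⟩ : ∃ v : Fin 3 → ℝ, v ≠ 0 ∧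
      v 0 + v 1 + v 2 = 0 ∧ α * v 0 - β * v 1 = k * (c * v 0 + d * v 1 + v 2) := by
      refine ⟨![(-β - k * d) - (-k), (-k) - (α - k * c), (α - k * c) - (-β - k * d)],
        ?_, ?_, ?_⟩
      · intro h0
        have e0 := congrFun h0 0
        have e1 := congrFun h0 1
        simp at e0 e1
        have h1 : -β - k * d = -k := by linarith
        have h2 : α - k * c = -k := by linarith
        have h3 : k * t = 0 := by
          rw [← h]
          linear_combination (-1) * hk + x * h2 + y * h1
        have h4 : k = 0 := by
          rcases mul_eq_zero.1 h3 with h5 | h5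
          · exact h5
          · exact absurd h5 ht.ne'
        subst h4
        linarith
      · simp
        ring
      · simp
        ring
    have key : ∀ w : Fin 3 → ℝ, w ≠ 0 → w 0 + w 1 + w 2 = 0 → ∃ i, w i < 0 := by
      intro w hw hs
      by_contra! hcon
      apply hw
      have h0 := hcon 0
      have h1 := hcon 1
      have h2 := hcon 2
      funext i
      fin_cases i <;> simp <;> linarith
    rcases le_total 0 (a * v 0 + b * v 1 - k ^ 2 * (c * v 0 + d * v 1 + v 2)) with hg | hg
    · exact ⟨v, key v hne hsum, hsum, hlin, hg⟩
    · refine ⟨-v, key (-v) (neg_ne_zero.2 hne) ?_, ?_, ?_, ?_⟩ <;>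
        simp only [Pi.neg_apply] <;> linarith
  obtain ⟨s, hs, hpos, i, hi⟩ := exit_simplex ![x, y, z] v
    (by intro i; fin_cases i <;> simpa) hneg
  have p0 := hpos 0
  have p1 := hpos 1
  have p2 := hpos 2
  simp at p0 p1 p2
  have hsum' : (x + s * v 0) + (y + s * v 1) + (z + s * v 2) = t := by
    linear_combination h + s * hsum
  refine ⟨x + s * v 0, y + s * v 1, z + s * v 2, p0, p1, p2, hsum', ?_, ?_⟩
  · fin_cases i <;> simp at hi <;> tauto
  · have hD' := den_pos hc hd ht p0 p1 p2 hsum'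
    have hk' : α * (x + s * v 0) - β * (y + s * v 1) =
        k * (c * (x + s * v 0) + d * (y + s * v 1) + (z + s * v 2)) := by
      linear_combination hk + s * hlin
    have e : ∀ D : ℝ, 0 < D → (k * D) ^ 2 / D = k ^ 2 * D := by
      intro D hD
      field_simp
    rw [hk, hk', e _ hD, e _ hD']
    have := mul_nonneg hs hgain
    linarith

lemma gFun_le (a b c d t : ℝ) (ha : 0 < a) (hb : 0 < b) (hc : 0 < c)
    (hd : 0 < d) (x y z : ℝ) (hx : 0 ≤ x) (hy : 0 ≤ y) (hz : 0 ≤ z)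
    (h : x + y + z = t) : gFun a b c d x y z ≤ a * t + b * t := by
  unfold gFun
  have h1 : 0 ≤ (Real.sqrt (a * c) * x - Real.sqrt (b * d) * y) ^ 2 / (c * x + d * y + z) := by
    positivity
  have h2 : a * x ≤ a * t := by gcongr; linarith
  have h3 : b * y ≤ b * t := by gcongr; linarith
  linarith

/-- For positive reals `a, b, c, d, t`, the supremum of `g` over the simplex
`{(t₁,t₂,t₃) : t₁,t₂,t₃ ≥ 0, t₁+t₂+t₃ = t}` equals the maximum of the suprema of `g` over
the three edges `t₂ = 0`, `t₁ = 0` and `t₃ = 0`. -/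
theorem stmt2 (a b c d t : ℝ) (ha : 0 < a) (hb : 0 < b) (hc : 0 < c)
    (hd : 0 < d) (ht : 0 < t) :
    sSup {y : ℝ | ∃ t₁ t₂ t₃ : ℝ, 0 ≤ t₁ ∧ 0 ≤ t₂ ∧ 0 ≤ t₃ ∧ t₁ + t₂ + t₃ = t ∧
        y = gFun a b c d t₁ t₂ t₃} =
      max (max
        (sSup {y : ℝ | ∃ t₁ t₃ : ℝ, 0 ≤ t₁ ∧ 0 ≤ t₃ ∧ t₁ + t₃ = t ∧
          y = gFun a b c d t₁ 0 t₃})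
        (sSup {y : ℝ | ∃ t₂ t₃ : ℝ, 0 ≤ t₂ ∧ 0 ≤ t₃ ∧ t₂ + t₃ = t ∧
          y = gFun a b c d 0 t₂ t₃}))
        (sSup {y : ℝ | ∃ t₁ t₂ : ℝ, 0 ≤ t₁ ∧ 0 ≤ t₂ ∧ t₁ + t₂ = t ∧
          y = gFun a b c d t₁ t₂ 0}) := by
  have B : BddAbove {y : ℝ | ∃ t₁ t₂ t₃ : ℝ, 0 ≤ t₁ ∧ 0 ≤ t₂ ∧ 0 ≤ t₃ ∧ t₁ + t₂ + t₃ = t ∧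
        y = gFun a b c d t₁ t₂ t₃} := by
    refine ⟨a * t + b * t, ?_⟩
    rintro _ ⟨x, y, z, hx, hy, hz, h, rfl⟩
    exact gFun_le a b c d t ha hb hc hd x y z hx hy hz h
  have S1 : {y : ℝ | ∃ t₁ t₃ : ℝ, 0 ≤ t₁ ∧ 0 ≤ t₃ ∧ t₁ + t₃ = t ∧
      y = gFun a b c d t₁ 0 t₃} ⊆ {y : ℝ | ∃ t₁ t₂ t₃ : ℝ, 0 ≤ t₁ ∧ 0 ≤ t₂ ∧ 0 ≤ t₃ ∧
        t₁ + t₂ + t₃ = t ∧ y = gFun a b c d t₁ t₂ t₃} := by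
    rintro _ ⟨x, z, hx, hz, h, rfl⟩
    exact ⟨x, 0, z, hx, le_rfl, hz, by linarith, rfl⟩
  have S2 : {y : ℝ | ∃ t₂ t₃ : ℝ, 0 ≤ t₂ ∧ 0 ≤ t₃ ∧ t₂ + t₃ = t ∧
      y = gFun a b c d 0 t₂ t₃} ⊆ {y : ℝ | ∃ t₁ t₂ t₃ : ℝ, 0 ≤ t₁ ∧ 0 ≤ t₂ ∧ 0 ≤ t₃ ∧
        t₁ + t₂ + t₃ = t ∧ y = gFun a b c d t₁ t₂ t₃} := by
    rintro _ ⟨y, z, hy, hz, h, rfl⟩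
    exact ⟨0, y, z, le_rfl, hy, hz, by linarith, rfl⟩
  have S3 : {y : ℝ | ∃ t₁ t₂ : ℝ, 0 ≤ t₁ ∧ 0 ≤ t₂ ∧ t₁ + t₂ = t ∧
      y = gFun a b c d t₁ t₂ 0} ⊆ {y : ℝ | ∃ t₁ t₂ t₃ : ℝ, 0 ≤ t₁ ∧ 0 ≤ t₂ ∧ 0 ≤ t₃ ∧
        t₁ + t₂ + t₃ = t ∧ y = gFun a b c d t₁ t₂ t₃} := by
    rintro _ ⟨x, y, hx, hy, h, rfl⟩
    exact ⟨x, y, 0, hx, hy, le_rfl, by linarith, rfl⟩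
  apply le_antisymm
  · refine csSup_le ⟨_, t, 0, 0, ht.le, le_rfl, le_rfl, by ring, rfl⟩ ?_
    rintro _ ⟨x, y, z, hx, hy, hz, h, rfl⟩
    obtain ⟨x', y', z', hx', hy', hz', h', h0, hle⟩ :=
      dominated a b c d t ha hc hd ht x y z hx hy hz h
    refine hle.trans ?_
    rcases h0 with rfl | rfl | rfl
    · exact (le_csSup (B.mono S2) ⟨y', z', hy', hz', by linarith, rfl⟩).trans
        ((le_max_right _ _).trans (le_max_left _ _))
    · exact (le_csSup (B.mono S1) ⟨x', z', hx', hz', by linarith, rfl⟩).trans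
        ((le_max_left _ _).trans (le_max_left _ _))
    · exact (le_csSup (B.mono S3) ⟨x', y', hx', hy', by linarith, rfl⟩).trans
        (le_max_right _ _)
  · refine max_le (max_le ?_ ?_) ?_
    · exact csSup_le_csSup B ⟨_, t, 0, ht.le, le_rfl, by ring, rfl⟩ S1
    · exact csSup_le_csSup B ⟨_, t, 0, ht.le, le_rfl, by ring, rfl⟩ S2
    · exact csSup_le_csSup B ⟨_, t, 0, ht.le, le_rfl, by ring, rfl⟩ S3
end

section
/- Let α, β be real numbers and let C be a nonempty compact convex subset of ℝ² contained in the open half-plane {(x, y) : x > 0}. Define f(x, y) = −(y − α·x)²/x + β·x. Then the maximum of f over C is attained at some point of the topological frontier of C; that is, there exists z in the frontier of C such that f(w) ≤ f(z) for all w ∈ C. -/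
/-- Let `C ⊆ ℝ²` be a nonempty compact convex set contained in the open
half-plane `{(x,y) : x > 0}`, and let `f(x,y) = −(y − α·x)²/x + β·x`. Then the maximum of `f`
over `C` is attained at some point of the topological frontier of `C`. -/
theorem stmt3 (α β : ℝ) (C : Set (ℝ × ℝ)) (hne : C.Nonempty)
    (hcomp : IsCompact C) (hconv : Convex ℝ C) (hpos : ∀ p ∈ C, 0 < p.1) :
    ∃ z ∈ frontier C, ∀ w ∈ C,
      -(w.2 - α * w.1) ^ 2 / w.1 + β * w.1 ≤ -(z.2 - α * z.1) ^ 2 / z.1 + β * z.1 := by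
  obtain ⟨f, hf⟩ : ∃ f : ℝ × ℝ → ℝ, ∀ w, f w = -(w.2 - α * w.1) ^ 2 / w.1 + β * w.1 :=
    ⟨_, fun _ => rfl⟩
  simp only [← hf]
  have hcont : ContinuousOn f C := by
    have : f = fun w => -(w.2 - α * w.1) ^ 2 / w.1 + β * w.1 := funext hf
    rw [this]
    refine ContinuousOn.add (ContinuousOn.div (by fun_prop) (by fun_prop) ?_) (by fun_prop)
    exact fun p hp => (hpos p hp).ne'
  have hhom : ∀ t : ℝ, 0 < t → ∀ w : ℝ × ℝ, 0 < w.1 → f (t • w) = t * f w := by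
    intro t ht w hw
    simp only [hf, Prod.smul_fst, Prod.smul_snd, smul_eq_mul]
    field_simp
  obtain ⟨m, hm, hmax⟩ := hcomp.exists_isMaxOn hne hcont
  have hMc : IsCompact (C ∩ f ⁻¹' Set.Ici (f m)) :=
    hcomp.of_isClosed_subset
      (hcont.preimage_isClosed_of_isClosed hcomp.isClosed isClosed_Ici) Set.inter_subset_left
  obtain ⟨z, hz, hzmax⟩ := hMc.exists_isMaxOn ⟨m, hm, le_refl (f m)⟩
    (continuous_fst.continuousOn)
  have hzf : ∀ w ∈ C, f w ≤ f z := fun w hw => le_trans (hmax hw) hz.2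
  refine ⟨z, ⟨subset_closure hz.1, fun hint => ?_⟩, hzf⟩
  have hz0 := hpos z hz.1
  have hnhds : ∀ᶠ t : ℝ in nhds 1, t • z ∈ C := by
    have hc : ContinuousAt (fun t : ℝ => t • z) 1 := by fun_prop
    apply hc.eventually_mem
    simpa using mem_interior_iff_mem_nhds.1 hint
  obtain ⟨ε, hε, hball⟩ := Metric.eventually_nhds_iff.1 hnhds
  obtain ⟨δ, hδ, hδε, hδ1⟩ : ∃ δ : ℝ, 0 < δ ∧ δ < ε ∧ δ < 1 :=
    ⟨min ε 1 / 2, by positivity, by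
      have := min_le_left ε 1
      have : 0 < min ε 1 := by positivity
      linarith, by
      have := min_le_right ε 1
      linarith⟩
  have h1 : (1 + δ) • z ∈ C := hball (by simp [Real.dist_eq, abs_of_pos hδ, hδε])
  have h2 : (1 - δ) • z ∈ C := hball (by simp [Real.dist_eq, abs_of_pos hδ, hδε])
  have e1 := hzf _ h1
  have e2 := hzf _ h2
  rw [hhom _ (by linarith) _ hz0] at e1 e2
  have h0 : f z = 0 := by
    apply le_antisymm <;> nlinarith
  have h3 : (1 + δ) • z ∈ C ∩ f ⁻¹' Set.Ici (f m) := by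
    refine ⟨h1, ?_⟩
    have hz2 : f m ≤ f z := hz.2
    simp only [Set.mem_preimage, Set.mem_Ici]
    rw [hhom _ (by linarith) _ hz0]
    rw [h0] at hz2 ⊢
    simpa using hz2
  have h4 : ((1 + δ) • z).1 ≤ z.1 := hzmax h3
  simp only [Prod.smul_fst, smul_eq_mul] at h4
  nlinarith
end

section
/- Let λ > 0, δ ≥ 0 and F ∈ [0,1] be real numbers. Then √(3/2)·((2F+1)·√λ + √(6·(λ·(2F+1) + 6δ))) > (2F+1)·√(λ·(2−2F) + 6δ) + (2−2F)·√(λ·(2F+1) + 6δ). -/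
/-- For `λ > 0`, `δ ≥ 0` and fidelity `F ∈ [0,1]`,
`√(3/2)·((2F+1)·√λ + √(6·(λ·(2F+1) + 6δ)))
  > (2F+1)·√(λ·(2−2F) + 6δ) + (2−2F)·√(λ·(2F+1) + 6δ)`. -/
theorem stmt5 (lam δ F : ℝ) (hlam : 0 < lam) (hδ : 0 ≤ δ)
    (hF : F ∈ Set.Icc (0 : ℝ) 1) :
    Real.sqrt (3 / 2) *
        ((2 * F + 1) * Real.sqrt lam + Real.sqrt (6 * (lam * (2 * F + 1) + 6 * δ))) >
      (2 * F + 1) * Real.sqrt (lam * (2 - 2 * F) + 6 * δ) +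
        (2 - 2 * F) * Real.sqrt (lam * (2 * F + 1) + 6 * δ) := by
  obtain ⟨h0, h1⟩ := hF
  have hA : 0 ≤ lam * (2 * F + 1) + 6 * δ := by positivity
  have e1 : Real.sqrt (3 / 2) * Real.sqrt (6 * (lam * (2 * F + 1) + 6 * δ))
      = 3 * Real.sqrt (lam * (2 * F + 1) + 6 * δ) := by
    rw [← Real.sqrt_mul (by norm_num),
      show (3 / 2 : ℝ) * (6 * (lam * (2 * F + 1) + 6 * δ))
        = 3 ^ 2 * (lam * (2 * F + 1) + 6 * δ) by ring,
      Real.sqrt_mul (by norm_num), Real.sqrt_sq (by norm_num)]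
  have key : Real.sqrt (lam * (2 - 2 * F) + 6 * δ) <
      Real.sqrt (3 / 2) * Real.sqrt lam + Real.sqrt (lam * (2 * F + 1) + 6 * δ) := by
    have hs : 0 < Real.sqrt (3 / 2) * Real.sqrt lam := by positivity
    have hP := Real.sqrt_nonneg (lam * (2 * F + 1) + 6 * δ)
    have hs2 : (Real.sqrt (3 / 2) * Real.sqrt lam) ^ 2 = 3 / 2 * lam := by
      rw [mul_pow, Real.sq_sqrt (by norm_num), Real.sq_sqrt hlam.le]
    have hP2 := Real.sq_sqrt hA
    rw [Real.sqrt_lt' (by positivity), add_sq, hs2, hP2]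
    have := mul_nonneg hs.le hP
    have := mul_nonneg hlam.le h0
    nlinarith
  have := mul_lt_mul_of_pos_left key (show 0 < 2 * F + 1 by linarith)
  rw [mul_add, e1]
  linarith
end

section
/- Let δ′ ≥ 0 be a real number and consider h(F) = √(3/2) + √((2−2F) + δ′) − √((2F+1) + δ′) for F ∈ [0,1]. If δ′ ≤ 3/8, then there exists a unique F* ∈ [0,1] satisfying √((2F*+1) + δ′) − √((2−2F*) + δ′) = √(3/2), and for every F ∈ [0,1] one has h(F) > 0 if and only if F < F*. If δ′ > 3/8, then h(F) > 0 for every F ∈ [0,1]. -/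
/-- For normalized dark count `δ′ ≥ 0`, set
`h(F) = √(3/2) + √((2−2F) + δ′) − √((2F+1) + δ′)` on `[0,1]`.
If `δ′ ≤ 3/8` there is a unique critical fidelity `F* ∈ [0,1]` with
`√((2F*+1) + δ′) − √((2−2F*) + δ′) = √(3/2)`, and `h(F) > 0 ↔ F < F*` on `[0,1]`.
If `δ′ > 3/8` then `h > 0` on all of `[0,1]`. -/
theorem stmt6 (δ' : ℝ) (hδ' : 0 ≤ δ') :
    (δ' ≤ 3 / 8 →
      ∃ Fs : ℝ, Fs ∈ Set.Icc (0 : ℝ) 1 ∧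
        Real.sqrt ((2 * Fs + 1) + δ') - Real.sqrt ((2 - 2 * Fs) + δ') = Real.sqrt (3 / 2) ∧
        (∀ F ∈ Set.Icc (0 : ℝ) 1,
          Real.sqrt ((2 * F + 1) + δ') - Real.sqrt ((2 - 2 * F) + δ') = Real.sqrt (3 / 2) →
            F = Fs) ∧
        (∀ F ∈ Set.Icc (0 : ℝ) 1,
          (0 < Real.sqrt (3 / 2) + Real.sqrt ((2 - 2 * F) + δ') -
              Real.sqrt ((2 * F + 1) + δ') ↔ F < Fs))) ∧
    (3 / 8 < δ' →
      ∀ F ∈ Set.Icc (0 : ℝ) 1,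
        0 < Real.sqrt (3 / 2) + Real.sqrt ((2 - 2 * F) + δ') -
          Real.sqrt ((2 * F + 1) + δ')) := by
  have hc : 0 ≤ Real.sqrt (3 / 2) := Real.sqrt_nonneg _
  have hc2 : Real.sqrt (3 / 2) ^ 2 = 3 / 2 := Real.sq_sqrt (by norm_num)
  have hs : 0 ≤ Real.sqrt δ' := Real.sqrt_nonneg _
  have hs2 : Real.sqrt δ' ^ 2 = δ' := Real.sq_sqrt hδ'
  have hcs : Real.sqrt (3 / 2) * Real.sqrt δ' = Real.sqrt (3 / 2 * δ') :=
    (Real.sqrt_mul (by norm_num) _).symm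
  have mono : ∀ a b : ℝ, 0 ≤ a → a < b → b ≤ 1 →
      Real.sqrt ((2 * a + 1) + δ') - Real.sqrt ((2 - 2 * a) + δ') <
      Real.sqrt ((2 * b + 1) + δ') - Real.sqrt ((2 - 2 * b) + δ') := by
    intro a b ha hab hb
    have h1 : Real.sqrt ((2 * a + 1) + δ') < Real.sqrt ((2 * b + 1) + δ') :=
      Real.sqrt_lt_sqrt (by linarith) (by linarith)
    have h2 : Real.sqrt ((2 - 2 * b) + δ') < Real.sqrt ((2 - 2 * a) + δ') :=
      Real.sqrt_lt_sqrt (by linarith) (by linarith)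
    linarith
  have e1 : (2 * 1 + 1) + δ' = 3 + δ' := by ring
  have e2 : (2 - 2 * 1) + δ' = δ' := by ring
  constructor
  · intro hd
    have hle : Real.sqrt (3 / 2 * δ') ≤ 3 / 4 := by
      rw [Real.sqrt_le_left (by norm_num)]
      linarith
    have hone : Real.sqrt (3 / 2) ≤
        Real.sqrt ((2 * 1 + 1) + δ') - Real.sqrt ((2 - 2 * 1) + δ') := by
      rw [e1, e2]
      have : Real.sqrt (3 / 2) + Real.sqrt δ' ≤ Real.sqrt (3 + δ') :=
        Real.le_sqrt_of_sq_le (by nlinarith)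
      linarith
    have hzero : Real.sqrt ((2 * 0 + 1) + δ') - Real.sqrt ((2 - 2 * 0) + δ') ≤
        Real.sqrt (3 / 2) := by
      have : Real.sqrt ((2 * 0 + 1) + δ') ≤ Real.sqrt ((2 - 2 * 0) + δ') :=
        Real.sqrt_le_sqrt (by linarith)
      exact (sub_nonpos.mpr this).trans hc
    have hcont : ContinuousOn (fun F : ℝ =>
        Real.sqrt ((2 * F + 1) + δ') - Real.sqrt ((2 - 2 * F) + δ')) (Set.Icc 0 1) := by
      fun_prop
    obtain ⟨Fs, hFs, hEq⟩ := intermediate_value_Icc (zero_le_one) hcont ⟨hzero, hone⟩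
    replace hEq : Real.sqrt ((2 * Fs + 1) + δ') - Real.sqrt ((2 - 2 * Fs) + δ')
      = Real.sqrt (3 / 2) := hEq
    refine ⟨Fs, hFs, hEq, ?_, ?_⟩
    · intro F hF h
      rcases lt_trichotomy F Fs with hl | hl | hl
      · have := mono F Fs hF.1 hl hFs.2
        linarith
      · exact hl
      · have := mono Fs F hFs.1 hl hF.2
        linarith
    · intro F hF
      constructor
      · intro h
        by_contra hn
        rcases (not_lt.mp hn).eq_or_lt with hl | hl
        · subst hl
          linarith
        · have := mono Fs F hFs.1 hl hF.2
          linarith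
      · intro hl
        have := mono F Fs hF.1 hl hFs.2
        linarith
  · intro hd F hF
    have hlt : 3 / 4 < Real.sqrt (3 / 2 * δ') := by
      apply Real.lt_sqrt_of_sq_lt
      linarith
    have hone : Real.sqrt ((2 * 1 + 1) + δ') - Real.sqrt ((2 - 2 * 1) + δ') <
        Real.sqrt (3 / 2) := by
      rw [e1, e2]
      have : Real.sqrt (3 + δ') < Real.sqrt (3 / 2) + Real.sqrt δ' := by
        rw [Real.sqrt_lt (by linarith) (by linarith)]
        nlinarith
      linarith
    rcases hF.2.eq_or_lt with hl | hl
    · subst hl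
      linarith
    · have := mono F 1 hF.1 hl le_rfl
      have h3 := this.trans hone
      linarith
end

section
/- Let λ > 0, t > 0 and F ∈ [0,1) be real numbers, and define g(t₁, t₂, t₃) = λ·( 2t₁/(3(2F+1)) + 2t₂/(3(2−2F)) − ((t₁−t₂)/3)² / ((2F+1)t₁/6 + (2−2F)t₂/6 + t₃) ) for t₁, t₂, t₃ ≥ 0 with t₁ + t₂ + t₃ = t. Then the maximum of g over this simplex equals max( 6λt/((2F+1)(2−2F)(√(2F+1)+√(2−2F))²) , 4λt/((2−2F)(√6+√(2−2F))²) ). -/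
/-- The Fisher information `g(t₁,t₂,t₃)` for the fidelity `F` when times `t₁, t₂, t₃` are
allocated to coincidence, anti-coincidence and total-flux counting (total flux `λ` unknown). -/
noncomputable def fisherInfo (lam F t₁ t₂ t₃ : ℝ) : ℝ :=
  lam * (2 * t₁ / (3 * (2 * F + 1)) + 2 * t₂ / (3 * (2 - 2 * F)) -
    ((t₁ - t₂) / 3) ^ 2 /
      ((2 * F + 1) * t₁ / 6 + (2 - 2 * F) * t₂ / 6 + t₃))

/-- Weak duality: completing the square with multiplier `c` bounds the objective. -/
theorem fisher_dual (a b c M t₁ t₂ t₃ : ℝ) (ha : 0 < a) (hb : 0 < b)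
    (h1 : 0 ≤ t₁) (h2 : 0 ≤ t₂) (h3 : 0 ≤ t₃) (ht : 0 < t₁ + t₂ + t₃)
    (k1 : a / 6 * (c - 2 / a) ^ 2 ≤ M) (k2 : b / 6 * (c + 2 / b) ^ 2 ≤ M) (k3 : c ^ 2 ≤ M) :
    2 * t₁ / (3 * a) + 2 * t₂ / (3 * b) - ((t₁ - t₂) / 3) ^ 2 / (a * t₁ / 6 + b * t₂ / 6 + t₃)
      ≤ M * (t₁ + t₂ + t₃) := by
  have hD : 0 < a * t₁ / 6 + b * t₂ / 6 + t₃ := by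
    have e1 : 0 ≤ a * t₁ / 6 := by positivity
    have e2 : 0 ≤ b * t₂ / 6 := by positivity
    by_contra hcon
    have z1 : a * t₁ = 0 := by linarith
    have z2 : b * t₂ = 0 := by linarith
    have z3 : t₃ = 0 := by linarith
    have y1 : t₁ = 0 := (mul_eq_zero.mp z1).resolve_left ha.ne'
    have y2 : t₂ = 0 := (mul_eq_zero.mp z2).resolve_left hb.ne'
    linarith
  generalize hDD : a * t₁ / 6 + b * t₂ / 6 + t₃ = D at hD ⊢
  have hx : 2 * c * ((t₁ - t₂) / 3) - c ^ 2 * D ≤ ((t₁ - t₂) / 3) ^ 2 / D := by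
    rw [le_div_iff₀ hD]
    nlinarith [sq_nonneg ((t₁ - t₂) / 3 - c * D)]
  have m1 := mul_le_mul_of_nonneg_right k1 h1
  have m2 := mul_le_mul_of_nonneg_right k2 h2
  have m3 := mul_le_mul_of_nonneg_right k3 h3
  have e : 2 * t₁ / (3 * a) + 2 * t₂ / (3 * b) - (2 * c * ((t₁ - t₂) / 3) - c ^ 2 * D)
      = a / 6 * (c - 2 / a) ^ 2 * t₁ + b / 6 * (c + 2 / b) ^ 2 * t₂ + c ^ 2 * t₃ := by
    rw [← hDD]
    field_simp
    ring
  linarith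

theorem fisher_caseA (p q s : ℝ) (hp : 0 < p) (hq : 0 < q) (hs : s ^ 2 = 6)
    (h : p ^ 2 + q ^ 2 = 3) (hA1 : s * (p - q) ≤ 3) (hA2 : -3 ≤ s * (p - q)) :
    ∃ c : ℝ, p ^ 2 / 6 * (c - 2 / p ^ 2) ^ 2 ≤ 6 / (p ^ 2 * q ^ 2 * (p + q) ^ 2) ∧
      q ^ 2 / 6 * (c + 2 / q ^ 2) ^ 2 ≤ 6 / (p ^ 2 * q ^ 2 * (p + q) ^ 2) ∧
      c ^ 2 ≤ 6 / (p ^ 2 * q ^ 2 * (p + q) ^ 2) := by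
  have hpq : 0 < p + q := by linarith
  refine ⟨2 * (q - p) / (p * q * (p + q)), ?_, ?_, ?_⟩
  · apply le_of_eq
    have : 2 * (q - p) / (p * q * (p + q)) - 2 / p ^ 2
        = -2 * (p ^ 2 + q ^ 2) / (p ^ 2 * q * (p + q)) := by
      field_simp
      ring
    rw [this, h]
    field_simp
    ring
  · apply le_of_eq
    have : 2 * (q - p) / (p * q * (p + q)) + 2 / q ^ 2
        = 2 * (p ^ 2 + q ^ 2) / (p * q ^ 2 * (p + q)) := by
      field_simp
      ring
    rw [this, h]
    field_simp
    ring
  · have e : (s * (p - q)) ^ 2 ≤ 9 := by nlinarith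
    rw [mul_pow, hs] at e
    rw [div_pow, mul_pow (p * q), mul_pow p q]
    apply div_le_div_of_nonneg_right _ (by positivity)
    nlinarith

theorem fisher_caseB (p q s : ℝ) (hp : 0 < p) (hq : 0 < q) (hs0 : 0 < s) (hs : s ^ 2 = 6)
    (h : p ^ 2 + q ^ 2 = 3) (hB : 3 ≤ s * (p - q)) :
    ∃ c : ℝ, p ^ 2 / 6 * (c - 2 / p ^ 2) ^ 2 ≤ 4 / (q ^ 2 * (s + q) ^ 2) ∧
      q ^ 2 / 6 * (c + 2 / q ^ 2) ^ 2 ≤ 4 / (q ^ 2 * (s + q) ^ 2) ∧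
      c ^ 2 ≤ 4 / (q ^ 2 * (s + q) ^ 2) := by
  have hsq : 0 < s + q := by linarith
  refine ⟨-2 / (q * (s + q)), ?_, ?_, ?_⟩
  · have e : p ^ 2 / 6 * (-2 / (q * (s + q)) - 2 / p ^ 2) ^ 2
        = 4 * ((p ^ 2 + q * (s + q)) / (s * p)) ^ 2 / (q ^ 2 * (s + q) ^ 2) := by
      rw [← hs]
      field_simp
      ring
    rw [e]
    apply div_le_div_of_nonneg_right _ (by positivity)
    have h1 : (p ^ 2 + q * (s + q)) / (s * p) ≤ 1 := by
      rw [div_le_one (by positivity)]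
      nlinarith
    have h0 : 0 ≤ (p ^ 2 + q * (s + q)) / (s * p) := by positivity
    nlinarith
  · apply le_of_eq
    rw [← hs]
    field_simp
    ring
  · apply le_of_eq
    field_simp
    ring

/-- For `λ, t > 0` and `F ∈ [0,1)`, the maximum of the Fisher information `g`
over the simplex `{t₁,t₂,t₃ ≥ 0, t₁+t₂+t₃ = t}` equals
`max( 6λt/((2F+1)(2−2F)(√(2F+1)+√(2−2F))²), 4λt/((2−2F)(√6+√(2−2F))²) )`. -/
theorem stmt7 (lam t F : ℝ) (hlam : 0 < lam) (ht : 0 < t)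
    (hF : F ∈ Set.Ico (0 : ℝ) 1) :
    IsGreatest {y : ℝ | ∃ t₁ t₂ t₃ : ℝ, 0 ≤ t₁ ∧ 0 ≤ t₂ ∧ 0 ≤ t₃ ∧
        t₁ + t₂ + t₃ = t ∧ y = fisherInfo lam F t₁ t₂ t₃}
      (max
        (6 * lam * t /
          ((2 * F + 1) * (2 - 2 * F) *
            (Real.sqrt (2 * F + 1) + Real.sqrt (2 - 2 * F)) ^ 2))
        (4 * lam * t /
          ((2 - 2 * F) * (Real.sqrt 6 + Real.sqrt (2 - 2 * F)) ^ 2))) := by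
  obtain ⟨hF0, hF1⟩ := hF
  have ha : 0 < 2 * F + 1 := by linarith
  have hb : 0 < 2 - 2 * F := by linarith
  have hp : 0 < √(2 * F + 1) := Real.sqrt_pos.mpr ha
  have hq : 0 < √(2 - 2 * F) := Real.sqrt_pos.mpr hb
  have hs0 : 0 < √(6 : ℝ) := Real.sqrt_pos.mpr (by norm_num)
  have hp2 : √(2 * F + 1) ^ 2 = 2 * F + 1 := Real.sq_sqrt ha.le
  have hq2 : √(2 - 2 * F) ^ 2 = 2 - 2 * F := Real.sq_sqrt hb.le
  have hs : √(6 : ℝ) ^ 2 = 6 := Real.sq_sqrt (by norm_num)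
  unfold fisherInfo
  generalize √(2 * F + 1) = p at *
  generalize √(2 - 2 * F) = q at *
  generalize √(6 : ℝ) = s at *
  have hp1 : 1 ≤ p := by nlinarith
  have hq1 : q ≤ 3 / 2 := by nlinarith
  have hs1 : s ≤ 3 := by nlinarith
  have h : p ^ 2 + q ^ 2 = 3 := by rw [hp2, hq2]; ring
  rw [← hp2, ← hq2]
  clear hp2 hq2 ha hb hF0 hF1
  constructor
  · rcases max_choice (6 * lam * t / (p ^ 2 * q ^ 2 * (p + q) ^ 2))
      (4 * lam * t / (q ^ 2 * (s + q) ^ 2)) with hm | hm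
    · rw [hm]
      refine ⟨q * t / (p + q), p * t / (p + q), 0, by positivity, by positivity, le_rfl, ?_, ?_⟩
      · field_simp
        ring
      · have e : p ^ 2 * (q * t / (p + q)) / 6 + q ^ 2 * (p * t / (p + q)) / 6 + 0
            = p * q * t / 6 := by
          field_simp
          ring
        rw [e]
        have e2 : 6 * lam * t / (p ^ 2 * q ^ 2 * (p + q) ^ 2)
            = 2 / 3 * lam * t * (p ^ 2 + q ^ 2) ^ 2 / (p ^ 2 * q ^ 2 * (p + q) ^ 2) := by
          rw [h]
          ring
        rw [e2]
        field_simp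
        ring
    · rw [hm]
      refine ⟨0, s * t / (s + q), q * t / (s + q), le_rfl, by positivity, by positivity, ?_, ?_⟩
      · field_simp
        ring
      · have e : p ^ 2 * 0 / 6 + q ^ 2 * (s * t / (s + q)) / 6 + q * t / (s + q)
            = q * t / s := by
          rw [← hs]
          field_simp
          ring
        rw [e]
        have hs3 : s ^ 3 = 6 * s := by rw [← hs]; ring
        field_simp
        ring_nf
        simp only [hs3, hs]
        ring
  · rintro y ⟨t₁, t₂, t₃, h1, h2, h3, hsum, rfl⟩
    have key : ∀ M c : ℝ, p ^ 2 / 6 * (c - 2 / p ^ 2) ^ 2 ≤ M →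
        q ^ 2 / 6 * (c + 2 / q ^ 2) ^ 2 ≤ M → c ^ 2 ≤ M → _ := fun M c k1 k2 k3 =>
      mul_le_mul_of_nonneg_left (fisher_dual (p ^ 2) (q ^ 2) c M t₁ t₂ t₃ (by positivity)
        (by positivity) h1 h2 h3 (by linarith) k1 k2 k3) hlam.le
    rw [hsum] at key
    rcases le_total (s * (p - q)) 3 with hc | hc
    · obtain ⟨c, k1, k2, k3⟩ := fisher_caseA p q s hp hq hs h hc (by nlinarith)
      refine le_trans (key _ c k1 k2 k3) (le_trans (le_of_eq ?_) (le_max_left _ _))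
      ring
    · obtain ⟨c, k1, k2, k3⟩ := fisher_caseB p q s hp hq hs0 hs h hc
      refine le_trans (key _ c k1 k2 k3) (le_trans (le_of_eq ?_) (le_max_right _ _))
      ring
end

section
/- Let m be a positive integer, let w : {1,…,m} → (0,∞), set w_M = maxⱼ wⱼ, let c₀ > 0, fix an index i, and let a > 0 satisfy wᵢ·a < c₀. Then the infimum, over all μ′ : {1,…,m} → [0,∞) with μ′ᵢ > 0 and Σⱼ wⱼ·μ′ⱼ = c₀, of Σⱼ μ′ⱼ − a + a·log(a/μ′ᵢ) equals c₀/wᵢ − a + a·log(a·wᵢ/c₀) if a ≥ c₀·(w_M − wᵢ)/(w_M·wᵢ), and equals c₀/w_M + a·log((w_M − wᵢ)/w_M) if a < c₀·(w_M − wᵢ)/(w_M·wᵢ); moreover this infimum is attained. -/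
open Finset in
/-- Minimization of the Kullback–Leibler divergence
`D(Poi(a·eᵢ)‖Poi(μ′)) = Σⱼ μ′ⱼ − a + a·log(a/μ′ᵢ)` over intensity vectors `μ′ ≥ 0` with
`μ′ᵢ > 0` on the hyperplane `Σⱼ wⱼ·μ′ⱼ = c₀`: the infimum is attained and equals
`c₀/wᵢ − a + a·log(a·wᵢ/c₀)` when `a ≥ c₀(w_M − wᵢ)/(w_M·wᵢ)`, and
`c₀/w_M + a·log((w_M − wᵢ)/w_M)` otherwise, where `w_M = maxⱼ wⱼ`. -/
theorem stmt15 (m : ℕ) (hm : 0 < m) (w : Fin m → ℝ) (hw : ∀ j, 0 < w j)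
    (wM : ℝ) (hwM : IsGreatest (Set.range w) wM)
    (c₀ : ℝ) (hc₀ : 0 < c₀) (i : Fin m) (a : ℝ) (ha : 0 < a)
    (hai : w i * a < c₀) :
    IsLeast {y : ℝ | ∃ μ' : Fin m → ℝ, (∀ j, 0 ≤ μ' j) ∧ 0 < μ' i ∧
        (∑ j, w j * μ' j) = c₀ ∧
        y = (∑ j, μ' j) - a + a * Real.log (a / μ' i)}
      (if c₀ * (wM - w i) / (wM * w i) ≤ a then
        c₀ / w i - a + a * Real.log (a * w i / c₀)
      else
        c₀ / wM + a * Real.log ((wM - w i) / wM)) := by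
  obtain ⟨⟨M, hM⟩, hub⟩ := hwM
  have hle : ∀ j, w j ≤ wM := fun j => hub ⟨j, rfl⟩
  have hwi := hw i
  have hMpos : 0 < wM := hM ▸ hw M
  have key : ∀ μ' : Fin m → ℝ, (∀ j, 0 ≤ μ' j) → (∑ j, w j * μ' j) = c₀ →
      c₀ / wM + μ' i * ((wM - w i) / wM) ≤ ∑ j, μ' j := by
    intro μ' h0 hs
    have h1 : (wM - w i) * μ' i ≤ ∑ j, (wM - w j) * μ' j :=
      Finset.single_le_sum (f := fun j => (wM - w j) * μ' j)
        (fun j _ => mul_nonneg (sub_nonneg.2 (hle j)) (h0 j)) (Finset.mem_univ i)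
    have h2 : ∑ j, (wM - w j) * μ' j = wM * (∑ j, μ' j) - c₀ := by
      rw [← hs, Finset.mul_sum, ← Finset.sum_sub_distrib]
      exact Finset.sum_congr rfl fun j _ => by ring
    have h3 : c₀ / wM + μ' i * ((wM - w i) / wM) = (c₀ + (wM - w i) * μ' i) / wM := by
      field_simp
    rw [h3, div_le_iff₀ hMpos]
    linarith
  split_ifs with hcase
  · have hx0 : 0 < c₀ / w i := div_pos hc₀ hwi
    constructor
    · refine ⟨Pi.single i (c₀ / w i), ?_, ?_, ?_, ?_⟩
      · intro j
        by_cases h : j = i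
        · subst h; simpa using hx0.le
        · simp [h]
      · simpa using hx0
      · rw [Finset.sum_eq_single i]
        · simp; field_simp
        · intro j _ h; simp [h]
        · simp
      · rw [Finset.sum_pi_single']
        have : a / (c₀ / w i) = a * w i / c₀ := by field_simp
        simp [this]
    · rintro y ⟨μ', h0, hi, hs, rfl⟩
      have hS := key μ' h0 hs
      have hxle : w i * μ' i ≤ c₀ := by
        rw [← hs]
        exact Finset.single_le_sum (f := fun j => w j * μ' j)
          (fun j _ => mul_nonneg (hw j).le (h0 j)) (Finset.mem_univ i)
      have hlog : Real.log (a / μ' i) = Real.log (a * w i / c₀) - Real.log (w i * μ' i / c₀) := by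
        rw [← Real.log_div (by positivity) (by positivity)]
        congr 1
        field_simp
      have hl := Real.log_le_sub_one_of_pos (x := w i * μ' i / c₀) (by positivity)
      have hl2 := mul_le_mul_of_nonneg_left hl ha.le
      have hprod : 0 ≤ (c₀ - w i * μ' i) / c₀ * (a - c₀ * (wM - w i) / (wM * w i)) :=
        mul_nonneg (div_nonneg (by linarith) hc₀.le) (by linarith)
      have hid : c₀ / wM + μ' i * ((wM - w i) / wM) - a * (w i * μ' i / c₀ - 1) - c₀ / w i
          = (c₀ - w i * μ' i) / c₀ * (a - c₀ * (wM - w i) / (wM * w i)) := by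
        field_simp
        ring
      rw [hlog]
      linarith
  · push Not at hcase
    have hlt : w i < wM := by
      by_contra h
      have : c₀ * (wM - w i) / (wM * w i) ≤ 0 :=
        div_nonpos_of_nonpos_of_nonneg
          (mul_nonpos_of_nonneg_of_nonpos hc₀.le (by linarith)) (by positivity)
      linarith
    have hd : 0 < wM - w i := by linarith
    constructor
    · have hMi : M ≠ i := by rintro rfl; linarith
      have hx : 0 < a * wM / (wM - w i) := by positivity
      have hz : 0 ≤ (c₀ - w i * (a * wM / (wM - w i))) / wM := by
        refine div_nonneg ?_ hMpos.le
        rw [lt_div_iff₀ (by positivity)] at hcase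
        rw [sub_nonneg, mul_div_assoc', div_le_iff₀ hd]
        linarith
      refine ⟨fun j => (if j = i then a * wM / (wM - w i) else 0) +
        (if j = M then (c₀ - w i * (a * wM / (wM - w i))) / wM else 0), ?_, ?_, ?_, ?_⟩
      · intro j
        dsimp only
        split_ifs <;> linarith
      · simpa [hMi.symm] using hx
      · simp only [mul_add, Finset.sum_add_distrib, mul_ite, mul_zero, Finset.sum_ite_eq',
          Finset.mem_univ, if_true, hM]
        field_simp
        ring
      · have : a / (a * wM / (wM - w i)) = (wM - w i) / wM := by field_simp
        simp only [Finset.sum_add_distrib, Finset.sum_ite_eq',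
          Finset.mem_univ, if_true, hMi.symm, if_false, add_zero, this]
        field_simp
        ring
    · rintro y ⟨μ', h0, hi, hs, rfl⟩
      have hS := key μ' h0 hs
      have hlog : Real.log (a / μ' i) = Real.log ((wM - w i) / wM)
          - Real.log (μ' i * ((wM - w i) / wM) / a) := by
        rw [← Real.log_div (by positivity) (by positivity)]
        congr 1
        field_simp
      have hl := Real.log_le_sub_one_of_pos (x := μ' i * ((wM - w i) / wM) / a) (by positivity)
      have hl2 := mul_le_mul_of_nonneg_left hl ha.le
      have hid : a * (μ' i * ((wM - w i) / wM) / a - 1) = μ' i * ((wM - w i) / wM) - a := by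
        field_simp
      rw [hlog]
      linarith
end

section
/- Let m be a positive integer, w : {1,…,m} → (0,∞), c₀ > 0, let p : {1,…,m} → [0,1] with Σᵢ pᵢ = 1, and let a : {1,…,m} → (0,∞). For ν : {1,…,m} → [0,∞) and μ : {1,…,m} → (0,∞) define d(ν, μ) = Σⱼ (μⱼ − νⱼ) + Σⱼ νⱼ·log(νⱼ/μⱼ), with the convention 0·log 0 = 0. Then inf{ d((pⱼ·aⱼ)ⱼ, μ′) : μ′ⱼ > 0 for all j, Σⱼ wⱼ·μ′ⱼ = c₀ } ≤ Σᵢ pᵢ · inf{ d(aᵢ·eᵢ, μ′) : μ′ⱼ > 0 for all j, Σⱼ wⱼ·μ′ⱼ = c₀ }, where aᵢ·eᵢ denotes the vector whose i-th entry is aᵢ and whose other entries are 0. -/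
open Finset in
/-- The (generalized) Kullback–Leibler divergence `D(Poi(ν)‖Poi(μ))` between multivariate
Poisson distributions, `Σⱼ (μⱼ − νⱼ) + Σⱼ νⱼ·log(νⱼ/μⱼ)` (with the convention
`0·log 0 = 0`, which holds automatically since `Real.log 0 = 0`). -/
noncomputable def klPoisson (m : ℕ) (ν μ : Fin m → ℝ) : ℝ :=
  (∑ j, (μ j - ν j)) + ∑ j, ν j * Real.log (ν j / μ j)

lemma klPoisson_nonneg_aux (m : ℕ) (ν μ : Fin m → ℝ) (hν : ∀ j, 0 ≤ ν j) (hμ : ∀ j, 0 < μ j) :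
    0 ≤ klPoisson m ν μ := by
  unfold klPoisson
  rw [← Finset.sum_add_distrib]
  refine Finset.sum_nonneg fun j _ => ?_
  rcases (hν j).eq_or_lt with h | h
  · rw [← h]; simpa using (hμ j).le
  · have h1 := Real.log_le_sub_one_of_pos (div_pos (hμ j) h)
    have h2 : Real.log (ν j / μ j) = - Real.log (μ j / ν j) := by
      rw [← Real.log_inv, inv_div]
    have h3 : ν j * Real.log (μ j / ν j) ≤ ν j * (μ j / ν j - 1) :=
      mul_le_mul_of_nonneg_left h1 h.le
    have h4 : ν j * (μ j / ν j - 1) = μ j - ν j := by field_simp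
    rw [h2]
    linarith

lemma klPoisson_mix_le (m : ℕ) (p a : Fin m → ℝ) (hp0 : ∀ i, 0 ≤ p i)
    (ha : ∀ i, 0 < a i) (M : Fin m → Fin m → ℝ) (hM : ∀ i j, 0 < M i j) :
    klPoisson m (fun j => p j * a j) (fun j => ∑ i, p i * M i j) ≤
      ∑ i, p i * klPoisson m (fun j => if j = i then a i else 0) (M i) := by
  have key : ∀ i, klPoisson m (fun j => if j = i then a i else 0) (M i)
      = (∑ j, M i j) - a i + a i * Real.log (a i / M i i) := by
    intro i
    unfold klPoisson
    simp [Finset.sum_sub_distrib, ite_mul]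
  simp only [key]
  unfold klPoisson
  have h1 : ∑ j, ((∑ i, p i * M i j) - p j * a j) = ∑ i, p i * ((∑ j, M i j) - a i) := by
    simp only [mul_sub, Finset.sum_sub_distrib, Finset.mul_sum]
    rw [Finset.sum_comm]
  simp only [mul_add, Finset.sum_add_distrib]
  rw [h1]
  refine add_le_add le_rfl (Finset.sum_le_sum fun j _ => ?_)
  rcases (hp0 j).eq_or_lt with h | h
  · simp [← h]
  · rw [mul_assoc]
    have hle : p j * M j j ≤ ∑ i, p i * M i j :=
      Finset.single_le_sum (f := fun i => p i * M i j)
        (fun i _ => mul_nonneg (hp0 i) (hM i j).le) (Finset.mem_univ j)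
    have hpos : 0 < p j * M j j := mul_pos h (hM j j)
    have hS := hpos.trans_le hle
    have hpa := mul_pos h (ha j)
    refine mul_le_mul_of_nonneg_left (mul_le_mul_of_nonneg_left ?_ (ha j).le) h.le
    refine Real.log_le_log (div_pos hpa hS) ?_
    calc p j * a j / ∑ i, p i * M i j ≤ p j * a j / (p j * M j j) :=
          div_le_div_of_nonneg_left hpa.le hpos hle
      _ = a j / M j j := mul_div_mul_left _ _ h.ne'

open Finset in
/-- The constrained infimum of `D(Poi(ν)‖Poi(·))` over the hyperplane
`Σⱼ wⱼ·μ′ⱼ = c₀` evaluated at the mixture `ν = (pⱼ·aⱼ)ⱼ` is at most the corresponding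
`p`-mixture of the infima for the vectors `aᵢ·eᵢ`. -/
theorem stmt16 (m : ℕ) (hm : 0 < m) (w : Fin m → ℝ) (hw : ∀ j, 0 < w j)
    (c₀ : ℝ) (hc₀ : 0 < c₀) (p : Fin m → ℝ) (hp0 : ∀ i, 0 ≤ p i)
    (hp1 : ∀ i, p i ≤ 1) (hps : ∑ i, p i = 1) (a : Fin m → ℝ)
    (ha : ∀ i, 0 < a i) :
    sInf {y : ℝ | ∃ μ' : Fin m → ℝ, (∀ j, 0 < μ' j) ∧ (∑ j, w j * μ' j) = c₀ ∧
        y = klPoisson m (fun j => p j * a j) μ'} ≤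
      ∑ i, p i *
        sInf {y : ℝ | ∃ μ' : Fin m → ℝ, (∀ j, 0 < μ' j) ∧ (∑ j, w j * μ' j) = c₀ ∧
          y = klPoisson m (fun j => if j = i then a i else 0) μ'} := by
  refine le_of_forall_pos_le_add fun ε hε => ?_
  have hm' : (0 : ℝ) < m := by exact_mod_cast hm
  have hex : ∀ i, ∃ μ' : Fin m → ℝ, (∀ j, 0 < μ' j) ∧ (∑ j, w j * μ' j) = c₀ ∧
      klPoisson m (fun j => if j = i then a i else 0) μ' <
      sInf {y : ℝ | ∃ μ' : Fin m → ℝ, (∀ j, 0 < μ' j) ∧ (∑ j, w j * μ' j) = c₀ ∧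
          y = klPoisson m (fun j => if j = i then a i else 0) μ'} + ε := by
    intro i
    obtain ⟨y, ⟨μ', h1, h2, rfl⟩, hy⟩ := exists_lt_of_csInf_lt
      (s := {y : ℝ | ∃ μ' : Fin m → ℝ, (∀ j, 0 < μ' j) ∧ (∑ j, w j * μ' j) = c₀ ∧
          y = klPoisson m (fun j => if j = i then a i else 0) μ'})
      ⟨_, fun j => c₀ / (m * w j), fun j => div_pos hc₀ (mul_pos hm' (hw j)), by
        have : ∀ j, w j * (c₀ / (m * w j)) = c₀ / m := fun j => by
          have := (hw j).ne'
          field_simp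
        simp only [this]
        simp
        field_simp, rfl⟩ (lt_add_of_pos_right _ hε)
    exact ⟨μ', h1, h2, hy⟩
  choose M hM hMs hMl using hex
  have hmix := klPoisson_mix_le m p a hp0 ha M hM
  have hle : ∑ i, p i * klPoisson m (fun j => if j = i then a i else 0) (M i) ≤ _ :=
    Finset.sum_le_sum fun i _ => mul_le_mul_of_nonneg_left (hMl i).le (hp0 i)
  simp only [mul_add, Finset.sum_add_distrib] at hle
  rw [← Finset.sum_mul, hps, one_mul] at hle
  refine le_trans ?_ (hmix.trans hle)
  refine csInf_le ⟨0, ?_⟩ ⟨fun j => ∑ i, p i * M i j, ?_, ?_, rfl⟩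
  · rintro y ⟨μ', h1, -, rfl⟩
    exact klPoisson_nonneg_aux m _ _ (fun j => mul_nonneg (hp0 j) (ha j).le) h1
  · intro j
    have hnn : ∀ i ∈ Finset.univ, 0 ≤ p i * M i j := fun i _ => mul_nonneg (hp0 i) (hM i j).le
    refine (Finset.sum_nonneg hnn).lt_of_ne' fun h0 => ?_
    rw [Finset.sum_eq_zero_iff_of_nonneg hnn] at h0
    have : ∑ i, p i = 0 := Finset.sum_eq_zero fun i hi =>
      (mul_eq_zero.mp (h0 i hi)).resolve_right (hM i j).ne'
    linarith
  · simp only [Finset.mul_sum]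
    rw [Finset.sum_comm]
    have : ∀ i, ∑ j, w j * (p i * M i j) = p i * c₀ := fun i => by
      rw [← hMs i, Finset.mul_sum]
      exact Finset.sum_congr rfl fun j _ => by ring
    simp only [this]
    rw [← Finset.sum_mul, hps, one_mul]
end

section
/- Let m be a positive integer and let (x₁, y₁), …, (x_m, y_m) be points of ℝ² with yᵢ > 0 for all i. Then the minimum of (x, y) ↦ x/√y over the convex hull of {(x₁,y₁), …, (x_m,y_m)} equals the minimum over all pairs (i, j) of min_{s ∈ [0,1]} (s·xᵢ + (1−s)·xⱼ) / √(s·yᵢ + (1−s)·yⱼ). -/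
lemma aux_slope {m : ℕ} (u d : Fin m → ℝ) (h0 : ∀ k, d k = 0 → 0 ≤ u k)
    (hp : ∀ i j, d i < 0 → 0 < d j → 0 ≤ u i * d j - u j * d i) :
    ∃ l : ℝ, ∀ k, l * d k ≤ u k := by
  classical
  by_cases hN : ∃ i, d i < 0
  · obtain ⟨i, hi, hmax⟩ := Finset.exists_max_image (Finset.univ.filter fun i => d i < 0)
      (fun i => u i / d i) (by obtain ⟨i, hi⟩ := hN; exact ⟨i, by simpa using hi⟩)
    simp only [Finset.mem_filter, Finset.mem_univ, true_and] at hi hmax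
    refine ⟨u i / d i, fun k => ?_⟩
    rcases lt_trichotomy (d k) 0 with hk | hk | hk
    · exact (div_le_iff_of_neg hk).1 (hmax k hk)
    · simpa [hk] using h0 k hk
    · have := hp i k hi hk
      rw [div_mul_eq_mul_div, div_le_iff_of_neg hi]
      linarith
  · push Not at hN
    obtain ⟨l, hl⟩ := (Set.finite_range fun k => u k / d k).bddBelow
    refine ⟨l, fun k => ?_⟩
    rcases (hN k).eq_or_lt with hk | hk
    · simpa [← hk] using h0 k hk.symm
    · exact (le_div_iff₀ hk).1 (hl ⟨k, rfl⟩)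

/-- For points `(x₁,y₁), …, (x_m,y_m)` of `ℝ²` with all `yᵢ > 0`, the
minimum of `(x,y) ↦ x/√y` over their convex hull equals the minimum over all pairs `(i,j)`
of `min_{s ∈ [0,1]} (s·xᵢ + (1−s)·xⱼ)/√(s·yᵢ + (1−s)·yⱼ)`. -/
theorem stmt18 (m : ℕ) (hm : 0 < m) (x y : Fin m → ℝ) (hy : ∀ i, 0 < y i) :
    sInf {v : ℝ | ∃ p ∈ convexHull ℝ (Set.range fun i => (x i, y i)),
        v = p.1 / Real.sqrt p.2} =
      ⨅ i : Fin m, ⨅ j : Fin m, ⨅ s : Set.Icc (0 : ℝ) 1,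
        ((s : ℝ) * x i + (1 - (s : ℝ)) * x j) /
          Real.sqrt ((s : ℝ) * y i + (1 - (s : ℝ)) * y j) := by
  have : Nonempty (Fin m) := ⟨⟨0, hm⟩⟩
  set c := ⨅ i : Fin m, ⨅ j : Fin m, ⨅ s : Set.Icc (0 : ℝ) 1,
        ((s : ℝ) * x i + (1 - (s : ℝ)) * x j) /
          Real.sqrt ((s : ℝ) * y i + (1 - (s : ℝ)) * y j) with hc
  have hpos : ∀ i j (s : Set.Icc (0 : ℝ) 1), 0 < (s : ℝ) * y i + (1 - (s : ℝ)) * y j := by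
    rintro i j ⟨s, h0, h1⟩
    have := hy i
    have := hy j
    rcases h0.eq_or_lt with h | h
    · subst h; simpa using hy j
    · have h2 : 0 < s * y i := mul_pos h (hy i)
      have h3 : 0 ≤ (1 - s) * y j := mul_nonneg (by linarith) (hy j).le
      show 0 < s * y i + (1 - s) * y j
      linarith
  have hcle : ∀ i j (s : Set.Icc (0 : ℝ) 1), c ≤ ((s : ℝ) * x i + (1 - (s : ℝ)) * x j) /
          Real.sqrt ((s : ℝ) * y i + (1 - (s : ℝ)) * y j) := by
    intro i j s
    refine (ciInf_le (Set.finite_range _).bddBelow i).trans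
      ((ciInf_le (Set.finite_range _).bddBelow j).trans (ciInf_le ?_ s))
    apply IsCompact.bddBelow
    apply isCompact_range
    refine Continuous.div (by fun_prop) (by fun_prop) fun s => ?_
    exact (Real.sqrt_pos.2 (hpos i j s)).ne'
  have key : ∀ p ∈ convexHull ℝ (Set.range fun i => (x i, y i)), c ≤ p.1 / Real.sqrt p.2 := by
    intro p hp
    have hY : 0 < p.2 := by
      have hcv : Convex ℝ {q : ℝ × ℝ | 0 < q.2} :=
        convex_halfSpace_gt (LinearMap.snd ℝ ℝ ℝ).isLinear 0
      exact convexHull_min (by rintro _ ⟨i, rfl⟩; exact hy i) hcv hp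
    have hs := Real.sqrt_pos.2 hY
    rw [le_div_iff₀ hs]
    obtain ⟨l, hl⟩ := aux_slope (fun k => x k - c * Real.sqrt p.2) (fun k => y k - p.2)
      (by
        intro k hk
        have := hcle k k ⟨1, by simp⟩
        have hk' : y k = p.2 := by linarith
        simp only [one_mul, sub_self, zero_mul, add_zero, hk'] at this
        rw [le_div_iff₀ hs] at this
        simpa using this)
      (by
        intro i j hi hj
        have hd : 0 < y j - y i := by linarith
        have := hcle i j ⟨(y j - p.2) / (y j - y i), div_nonneg (by linarith) hd.le,
          (div_le_one hd).2 (by linarith)⟩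
        have e : (y j - p.2) / (y j - y i) * y i + (1 - (y j - p.2) / (y j - y i)) * y j = p.2 := by
          field_simp
          ring
        simp only [e] at this
        rw [le_div_iff₀ hs] at this
        have e2 : ((y j - p.2) / (y j - y i) * x i + (1 - (y j - p.2) / (y j - y i)) * x j)
          * (y j - y i) = (y j - p.2) * x i + (p.2 - y i) * x j := by
          field_simp
          ring
        have := mul_le_mul_of_nonneg_right this hd.le
        rw [e2] at this
        linarith)
    have hcv : Convex ℝ {q : ℝ × ℝ | c * Real.sqrt p.2 - l * p.2 ≤
        (LinearMap.fst ℝ ℝ ℝ - l • LinearMap.snd ℝ ℝ ℝ) q} :=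
      convex_halfSpace_ge (LinearMap.isLinear _) _
    have := convexHull_min (by
      rintro _ ⟨i, rfl⟩
      have := hl i
      simp
      linarith) hcv hp
    simp at this
    linarith
  apply le_antisymm
  · refine le_ciInf fun i => le_ciInf fun j => le_ciInf fun s => csInf_le ?_ ?_
    · exact ⟨c, by rintro _ ⟨p, hp, rfl⟩; exact key p hp⟩
    · refine ⟨(s : ℝ) • (x i, y i) + (1 - (s : ℝ)) • (x j, y j), ?_, by simp⟩
      exact convex_convexHull ℝ _ (subset_convexHull ℝ _ (Set.mem_range_self i))
        (subset_convexHull ℝ _ (Set.mem_range_self j)) s.2.1 (by linarith [s.2.2]) (by ring)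
  · refine le_csInf ?_ ?_
    · exact ⟨_, _, subset_convexHull ℝ _ ⟨⟨0, hm⟩, rfl⟩, rfl⟩
    · rintro _ ⟨p, hp, rfl⟩
      exact key p hp
end

section
/- Let λ > 0, t > 0, δ ≥ 0 and F ∈ [0,1] be real numbers with λ·(2−2F) + 6δ > 0, and define f(t₁, t₂) = λ·( 2λ·t₁/(3(λ(2F+1)+6δ)) + 2λ·t₂/(3(λ(2−2F)+6δ)) − ( λ(2F+1)·t₁/(3(λ(2F+1)+6δ)) − λ(2−2F)·t₂/(3(λ(2−2F)+6δ)) )² / ( λ(2F+1)²·t₁/(6(λ(2F+1)+6δ)) + λ(2−2F)²·t₂/(6(λ(2−2F)+6δ)) ) ) for t₁, t₂ ≥ 0 with t₁ + t₂ = t and the denominator positive (set f = 2λ²t₂/(3(λ(2−2F)+6δ)) when the denominator vanishes, which only occurs if 2F+1 or 2−2F times the respective tᵢ vanishes appropriately). Then the maximum of f over {t₁, t₂ ≥ 0, t₁ + t₂ = t} equals 6λ²t / ( (2F+1)·√(λ(2−2F)+6δ) + (2−2F)·√(λ(2F+1)+6δ) )². -/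
/-- The Fisher information `f(t₁,t₂)` for the fidelity `F` when times `t₁`, `t₂` are
allocated to coincidence and anti-coincidence counting, with total flux `λ` unknown and
dark count rate `δ`; when the denominator vanishes, `f` is set to
`2λ²t₂/(3(λ(2−2F)+6δ))`. -/
noncomputable def fisherInfoDark (lam δ F t₁ t₂ : ℝ) : ℝ :=
  if lam * (2 * F + 1) ^ 2 * t₁ / (6 * (lam * (2 * F + 1) + 6 * δ)) +
      lam * (2 - 2 * F) ^ 2 * t₂ / (6 * (lam * (2 - 2 * F) + 6 * δ)) = 0 then
    2 * lam ^ 2 * t₂ / (3 * (lam * (2 - 2 * F) + 6 * δ))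
  else
    lam * (2 * lam * t₁ / (3 * (lam * (2 * F + 1) + 6 * δ)) +
      2 * lam * t₂ / (3 * (lam * (2 - 2 * F) + 6 * δ)) -
      (lam * (2 * F + 1) * t₁ / (3 * (lam * (2 * F + 1) + 6 * δ)) -
          lam * (2 - 2 * F) * t₂ / (3 * (lam * (2 - 2 * F) + 6 * δ))) ^ 2 /
        (lam * (2 * F + 1) ^ 2 * t₁ / (6 * (lam * (2 * F + 1) + 6 * δ)) +
          lam * (2 - 2 * F) ^ 2 * t₂ / (6 * (lam * (2 - 2 * F) + 6 * δ))))

theorem fisher_aux (lam δ F t₁ t₂ p q : ℝ) (hp : 0 < p) (hq : 0 < q) (hlam : 0 < lam)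
    (hA : lam * (2 * F + 1) + 6 * δ = p ^ 2) (hB : lam * (2 - 2 * F) + 6 * δ = q ^ 2) :
    fisherInfoDark lam δ F t₁ t₂ =
      if (2 * F + 1) ^ 2 * q ^ 2 * t₁ + (2 - 2 * F) ^ 2 * p ^ 2 * t₂ = 0 then
        2 * lam ^ 2 * t₂ / (3 * q ^ 2)
      else 6 * lam ^ 2 * (t₁ * t₂) /
        ((2 * F + 1) ^ 2 * q ^ 2 * t₁ + (2 - 2 * F) ^ 2 * p ^ 2 * t₂) := by
  unfold fisherInfoDark
  rw [hA, hB]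
  have hD : lam * (2 * F + 1) ^ 2 * t₁ / (6 * p ^ 2) + lam * (2 - 2 * F) ^ 2 * t₂ / (6 * q ^ 2)
      = lam / (6 * p ^ 2 * q ^ 2) *
        ((2 * F + 1) ^ 2 * q ^ 2 * t₁ + (2 - 2 * F) ^ 2 * p ^ 2 * t₂) := by
    field_simp
  have hc : lam / (6 * p ^ 2 * q ^ 2) ≠ 0 := by positivity
  rw [hD]
  by_cases h : (2 * F + 1) ^ 2 * q ^ 2 * t₁ + (2 - 2 * F) ^ 2 * p ^ 2 * t₂ = 0
  · simp [h]
  · rw [if_neg h, if_neg (mul_ne_zero hc h)]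
    generalize hE : (2 * F + 1) ^ 2 * q ^ 2 * t₁ + (2 - 2 * F) ^ 2 * p ^ 2 * t₂ = E at *
    field_simp
    rw [← hE]
    ring

/-- For `λ > 0`, `t > 0`, `δ ≥ 0` and `F ∈ [0,1]` with
`λ(2−2F) + 6δ > 0`, the maximum of the Fisher information `f` over the allocations
`t₁, t₂ ≥ 0` with `t₁ + t₂ = t` equals
`6λ²t/((2F+1)·√(λ(2−2F)+6δ) + (2−2F)·√(λ(2F+1)+6δ))²`. -/
theorem stmt19 (lam t δ F : ℝ) (hlam : 0 < lam) (ht : 0 < t) (hδ : 0 ≤ δ)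
    (hF : F ∈ Set.Icc (0 : ℝ) 1) (hpos : 0 < lam * (2 - 2 * F) + 6 * δ) :
    IsGreatest {y : ℝ | ∃ t₁ t₂ : ℝ, 0 ≤ t₁ ∧ 0 ≤ t₂ ∧ t₁ + t₂ = t ∧
        y = fisherInfoDark lam δ F t₁ t₂}
      (6 * lam ^ 2 * t /
        ((2 * F + 1) * Real.sqrt (lam * (2 - 2 * F) + 6 * δ) +
          (2 - 2 * F) * Real.sqrt (lam * (2 * F + 1) + 6 * δ)) ^ 2) := by
  obtain ⟨hF0, hF1⟩ := hF
  have hApos : 0 < lam * (2 * F + 1) + 6 * δ := by positivity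
  have hA := (Real.sq_sqrt hApos.le).symm
  have hB := (Real.sq_sqrt hpos.le).symm
  have hp := Real.sqrt_pos.2 hApos
  have hq := Real.sqrt_pos.2 hpos
  generalize √(lam * (2 * F + 1) + 6 * δ) = p at *
  generalize √(lam * (2 - 2 * F) + 6 * δ) = q at *
  have ha : 0 < 2 * F + 1 := by positivity
  have hb : 0 ≤ 2 - 2 * F := by linarith
  have hS : 0 < (2 * F + 1) * q + (2 - 2 * F) * p := by positivity
  constructor
  · refine ⟨(2 - 2 * F) * p * t / ((2 * F + 1) * q + (2 - 2 * F) * p),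
      (2 * F + 1) * q * t / ((2 * F + 1) * q + (2 - 2 * F) * p),
      by positivity, by positivity, by field_simp; ring, ?_⟩
    rw [fisher_aux lam δ F _ _ p q hp hq hlam hA hB]
    rcases hF1.eq_or_lt with rfl | hlt
    · norm_num
      field_simp
      norm_num
    · have hb' : 0 < 2 - 2 * F := by linarith
      rw [if_neg (by positivity)]
      generalize 2 - 2 * F = b at *
      generalize 2 * F + 1 = a at *
      have h2 : a ^ 2 * q ^ 2 * (b * p * t / (a * q + b * p)) +
          b ^ 2 * p ^ 2 * (a * q * t / (a * q + b * p)) = a * q * b * p * t := by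
        field_simp
      rw [h2]
      field_simp
  · rintro y ⟨t₁, t₂, h1, h2, h12, rfl⟩
    rw [fisher_aux lam δ F _ _ p q hp hq hlam hA hB]
    split_ifs with h
    · have e1 : 0 ≤ (2 * F + 1) ^ 2 * q ^ 2 * t₁ := by positivity
      have e2 : 0 ≤ (2 - 2 * F) ^ 2 * p ^ 2 * t₂ := by positivity
      have e3 : (2 * F + 1) ^ 2 * q ^ 2 * t₁ = 0 := by linarith
      have e4 : (2 - 2 * F) ^ 2 * p ^ 2 * t₂ = 0 := by linarith
      have e5 : t₁ = 0 := by
        rcases mul_eq_zero.1 e3 with h | h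
        · exact absurd h (by positivity)
        · exact h
      have e6 : t₂ = t := by linarith
      have e7 : (2 - 2 * F) ^ 2 = 0 := by
        rw [e6, mul_assoc] at e4
        rcases mul_eq_zero.1 e4 with h | h
        · exact h
        · exact absurd h (by positivity)
      have e8 : F = 1 := by
        have := pow_eq_zero_iff (two_ne_zero) |>.1 e7
        linarith
      subst e8
      rw [e6]
      apply le_of_eq
      norm_num
      field_simp
      norm_num
    · have hE : 0 < (2 * F + 1) ^ 2 * q ^ 2 * t₁ + (2 - 2 * F) ^ 2 * p ^ 2 * t₂ :=
        lt_of_le_of_ne (by positivity) (Ne.symm h)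
      rw [div_le_div_iff₀ hE (by positivity), ← h12]
      have key : 0 ≤ 6 * lam ^ 2 *
          ((2 * F + 1) * q * t₁ - (2 - 2 * F) * p * t₂) ^ 2 := by positivity
      linarith
end
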